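/- The unary language L = { a^{2^{2n+1}} : n ≥ 0 } is recognized by an SL(2,ℚ)-automaton, and consequently 𝔏(SL(2,ℤ)) is a proper subset of 𝔏(SL(2,ℚ)). -/

import Mathlib

/-- A `G`-automaton over input alphabet `α`: a nondeterministic finite automaton
equipped with a register holding an element of the group `G`. -/
structure GAutomaton (α : Type*) (G : Type*) [Group G] where
  /-- the (finite) state set -/
  Q : Type
  finQ : Finite Q
  /-- the initial state -/
  q0 : Q
  /-- the accepting states -/
  acc : Set Q
  /-- the (finite) transition relation; `none` stands for ε -/
  δ : Set (Q × Option α × Q × G)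
  finδ : δ.Finite

namespace GAutomaton

variable {α : Type*} {G : Type*} [Group G]

/-- One computation step between configurations `(state, register, remaining input)`. -/
def Step (M : GAutomaton α G) (c c' : M.Q × G × List α) : Prop :=
  ∃ σ m, (c.1, σ, c'.1, m) ∈ M.δ ∧ c'.2.1 = c.2.1 * m ∧
    match σ with
    | none => c'.2.2 = c.2.2
    | some s => c.2.2 = s :: c'.2.2

/-- `M.StepsIn k c c'` : configuration `c'` is reachable from `c` in exactly `k` steps. -/
def StepsIn (M : GAutomaton α G) : ℕ → (M.Q × G × List α) → (M.Q × G × List α) → Prop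
  | 0, c, c' => c = c'
  | n + 1, c, c' => ∃ d, M.Step c d ∧ M.StepsIn n d c'

/-- `M` accepts the word `w` within `t` computation steps. -/
def AcceptsIn (M : GAutomaton α G) (w : List α) (t : ℕ) : Prop :=
  ∃ k ≤ t, ∃ q ∈ M.acc, M.StepsIn k (M.q0, 1, w) (q, 1, [])

/-- The language recognized by `M`. -/
def lang (M : GAutomaton α G) : Language α := {w | ∃ t, M.AcceptsIn w t}

/-- `M` is real-time if every transition consumes an input symbol. -/
def RealTime (M : GAutomaton α G) : Prop := ∀ tr ∈ M.δ, tr.2.1 ≠ none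

end GAutomaton

/-- `L ∈ 𝔏(G)` : the language `L` is recognized by some `G`-automaton. -/
def GRecognizable (G : Type*) [Group G] {α : Type*} (L : Language α) : Prop :=
  ∃ M : GAutomaton α G, M.lang = L

/-- `L ∈ 𝔏(G)ʷ_{t(n)}` : `L` is recognized by a weakly `t(n)` time-bounded `G`-automaton. -/
def GRecognizableInTime (G : Type*) [Group G] {α : Type*} (L : Language α) (t : ℕ → ℕ) : Prop :=
  ∃ M : GAutomaton α G, M.lang = L ∧ ∀ w ∈ L, M.AcceptsIn w (t w.length)

/-- `L ∈ 𝔏(G)ʷ_{O(n)}` : `L` is recognized by a weakly linear-time bounded `G`-automaton. -/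
def GRecognizableLinTime (G : Type*) [Group G] {α : Type*} (L : Language α) : Prop :=
  ∃ C : ℕ, GRecognizableInTime G L (fun n => C * n + C)

/-- The unary language `{ a^(2^(2n+1)) : n ≥ 0 }`. -/
def LoddPow : Language (Fin 1) :=
  {w | ∃ n : ℕ, w = List.replicate (2 ^ (2 * n + 1)) 0}

/-! In `SL(2, ℚ)`, conjugating a unipotent `[[1, b], [0, 1]]` by `diag(2, 1/2)` multiplies `b` by
`4`. Starting from `b = 2`, an automaton reaches exactly the exponents `2 * 4 ^ n` and compares them
with the length of its input by counting down.

In `SL(2, ℤ)` the Farey edge from `0` to `∞` separates the projective line, and a path in the Cayley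
graph that leaves one of its sides has to pass through the finite stabilizer of the edge. A word
representing a matrix with entries in `{-1, 0, 1}` can be cut at such a passage, or after its first
letter, into two shorter words of the same kind. The words read by an automaton between given states
with a given small matrix as register product are therefore derived as in a context-free grammar,
so the language can be pumped, whereas no arithmetic progression of positive difference consists of
powers of two. -/

section Pumping

variable {ι α : Type*}

/-- The conclusion of the Bar-Hillel pumping lemma for the word `w` and the language `L`. -/
def IsPumpable (L : Language α) (w : List α) : Prop :=
  ∃ u v x y z, w = u ++ v ++ x ++ y ++ z ∧ v ++ y ≠ [] ∧
    ∀ m, u ++ (List.replicate m v).flatten ++ x ++ (List.replicate m y).flatten ++ z ∈ L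

/-- With `D A n` the words derived in `n` steps from the symbol `A`: every word derived from `B`
becomes, between `u` and `v`, a word derived from `A`. -/
def Encloses (D : ι → ℕ → Language α) (A B : ι) (u v : List α) : Prop :=
  ∀ n, ∀ x ∈ D B n, ∃ k, u ++ x ++ v ∈ D A k

/-- Derivations of words of length at least two contain shorter derivations of at least half of
the word, as they do for a context-free grammar in Chomsky normal form. -/
def HasHeavySubderivations (N : Set ι) (D : ι → ℕ → Language α) : Prop :=
  ∀ A ∈ N, ∀ n, ∀ w ∈ D A n, 2 ≤ w.length → ∃ B ∈ N, ∃ k < n, ∃ u x v,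
    w = u ++ x ++ v ∧ w.length ≤ 2 * x.length ∧ x ∈ D B k ∧ Encloses D A B u v

variable {N : Set ι} {D : ι → ℕ → Language α} {A B C : ι} {u v x y z w : List α}

theorem Encloses.refl (D : ι → ℕ → Language α) (A : ι) : Encloses D A A [] [] :=
  fun n x hx => ⟨n, by simpa using hx⟩

theorem Encloses.trans (hAB : Encloses D A B u z) (hBC : Encloses D B C v y) :
    Encloses D A C (u ++ v) (y ++ z) := by
  intro n x hx
  obtain ⟨k, hk⟩ := hBC n x hx
  simpa only [List.append_assoc] using hAB k _ hk

theorem Encloses.iterate (h : Encloses D A A v y) {n : ℕ} (hx : x ∈ D A n) (m : ℕ) :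
    ∃ k, (List.replicate m v).flatten ++ x ++ (List.replicate m y).flatten ∈ D A k := by
  induction m with
  | zero => exact ⟨n, by simpa using hx⟩
  | succ m ih =>
    obtain ⟨k, hk⟩ := ih
    rw [List.replicate_succ, List.replicate_succ', List.flatten_cons, List.flatten_concat]
    simpa only [List.append_assoc] using h k _ hk

theorem isPumpable_of_encloses_self {n : ℕ} (hAB : Encloses D A B u z) (hB : Encloses D B B v y)
    (hvy : v ++ y ≠ []) (hx : x ∈ D B n) :
    IsPumpable {w | ∃ k, w ∈ D A k} (u ++ v ++ x ++ y ++ z) := by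
  refine ⟨u, v, x, y, z, rfl, hvy, fun m => ?_⟩
  obtain ⟨k, hk⟩ := hB.iterate hx m
  obtain ⟨n, hn⟩ := hAB k _ hk
  exact ⟨n, by simpa only [List.append_assoc] using hn⟩

/-- The symbols outside `U` are those already met on the way down from `A₀` to `A`; the word
shrinks by at most half whenever a new symbol leaves `U`, so that some symbol is met twice. -/
theorem HasHeavySubderivations.isPumpable_of_visited (hD : HasHeavySubderivations N D)
    {A₀ : ι} {w₀ : List α} (n : ℕ) : ∀ (U : Finset ι) (A : ι) (u w z : List α), A ∈ N → w ∈ D A n →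
      2 ^ U.card ≤ w.length → w₀ = u ++ w ++ z → Encloses D A₀ A u z →
      (∀ B ∈ N, B ∉ U → ∃ u v y z, w₀ = u ++ v ++ w ++ y ++ z ∧ v ++ y ≠ [] ∧
        Encloses D A₀ B u z ∧ Encloses D B A v y) →
      IsPumpable {w | ∃ k, w ∈ D A₀ k} w₀ := by
  classical
  induction n using Nat.strong_induction_on with
  | _ n ih =>
    intro U A u w z hA hw hlen hw₀ hA₀ hvisited
    by_cases hAU : A ∈ U
    swap
    · obtain ⟨u, v, y, z, rfl, hvy, hA₀A, hAA⟩ := hvisited A hA hAU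
      exact isPumpable_of_encloses_self hA₀A hAA hvy hw
    have hcard := Finset.card_erase_add_one hAU
    have htwo : 2 * 2 ^ (U.erase A).card ≤ w.length := by rwa [← pow_succ', hcard]
    obtain ⟨B, hB, k, hk, s, x, t, rfl, hhalf, hx, hAB⟩ :=
      hD A hA n w hw (by have := Nat.one_le_two_pow (n := (U.erase A).card); omega)
    have hvisited' : ∀ C ∈ N, C ∉ U → ∃ u v y z, w₀ = u ++ v ++ x ++ y ++ z ∧ v ++ y ≠ [] ∧
        Encloses D A₀ C u z ∧ Encloses D C B v y := by
      intro C hC hCU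
      obtain ⟨u, v, y, z, rfl, hvy, hA₀C, hCA⟩ := hvisited C hC hCU
      exact ⟨u, v ++ s, t ++ y, z, by simp only [List.append_assoc], by simp_all,
        hA₀C, hCA.trans hAB⟩
    have hw₀' : w₀ = (u ++ s) ++ x ++ (t ++ z) := by rw [hw₀]; simp only [List.append_assoc]
    by_cases hst : s ++ t = []
    · obtain ⟨rfl, rfl⟩ := List.append_eq_nil_iff.mp hst
      exact ih k hk U B _ x _ hB hx (by simpa using hlen) hw₀' (hA₀.trans hAB) hvisited'
    · refine ih k hk (U.erase A) B _ x _ hB hx (by omega) hw₀' (hA₀.trans hAB)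
        fun C hC hCU => ?_
      rcases eq_or_ne C A with rfl | hCA
      · exact ⟨u, s, t, z, by rw [hw₀]; simp only [List.append_assoc], hst, hA₀, hAB⟩
      · exact hvisited' C hC fun h => hCU (Finset.mem_erase.mpr ⟨hCA, h⟩)

theorem HasHeavySubderivations.exists_isPumpable (hD : HasHeavySubderivations N D)
    (hN : N.Finite) : ∃ K, ∀ A ∈ N, ∀ n, ∀ w ∈ D A n, K ≤ w.length →
      IsPumpable {w | ∃ k, w ∈ D A k} w :=
  ⟨2 ^ hN.toFinset.card, fun A hA n w hw hK =>
    hD.isPumpable_of_visited n hN.toFinset A [] w [] hA hw hK (by simp) (.refl D A)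
      fun B hB hBN => absurd (hN.mem_toFinset.mpr hB) hBN⟩

end Pumping

section LabelledPaths

variable {X α G : Type*}

/-- `LabelledPath E p l q w`: a path from `p` to `q` in the transition system `E` that reads `w`
and has the list `l` of register labels, in the format of `GAutomaton.δ`. -/
inductive LabelledPath (E : Set (X × Option α × X × G)) : X → List G → X → List α → Prop
  | nil (p : X) : LabelledPath E p [] p []
  | cons {p σ r m l q w} : (p, σ, r, m) ∈ E → LabelledPath E r l q w →
      LabelledPath E p (m :: l) q (σ.toList ++ w)

namespace LabelledPath

variable {E : Set (X × Option α × X × G)} {p q r : X} {l l₁ l₂ : List G} {w w₁ w₂ : List α}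

theorem append (h₁ : LabelledPath E p l₁ r w₁) (h₂ : LabelledPath E r l₂ q w₂) :
    LabelledPath E p (l₁ ++ l₂) q (w₁ ++ w₂) := by
  induction h₁ with
  | nil => exact h₂
  | cons e _ ih =>
    rw [List.cons_append, List.append_assoc]
    exact .cons e (ih h₂)

theorem exists_split : ∀ {l₁ : List G} {p : X} {w : List α}, LabelledPath E p (l₁ ++ l₂) q w →
    ∃ r w₁ w₂, w = w₁ ++ w₂ ∧ LabelledPath E p l₁ r w₁ ∧ LabelledPath E r l₂ q w₂
  | [], p, w, h => ⟨p, [], w, rfl, .nil p, h⟩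
  | _ :: _, _, _, .cons (σ := σ) e h => by
    obtain ⟨r, w₁, w₂, rfl, h₁, h₂⟩ := exists_split h
    exact ⟨r, σ.toList ++ w₁, w₂, (List.append_assoc ..).symm, .cons e h₁, h₂⟩

theorem length_le (h : LabelledPath E p l q w) : w.length ≤ l.length := by
  induction h with
  | nil => rfl
  | @cons _ σ _ _ _ _ _ _ _ ih =>
    have : σ.toList.length ≤ 1 := by cases σ <;> simp
    simp only [List.length_append, List.length_cons]
    omega

theorem label_mem {S : Set G} (hS : ∀ p σ r m, (p, σ, r, m) ∈ E → m ∈ S)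
    (h : LabelledPath E p l q w) : ∀ s ∈ l, s ∈ S := by
  induction h with
  | nil => simp
  | cons e _ ih => exact List.forall_mem_cons.mpr ⟨hS _ _ _ _ e, ih⟩

theorem target_mem {F : Set X} (hF : ∀ p σ r m, (p, σ, r, m) ∈ E → r ∈ F) (hp : p ∈ F)
    (h : LabelledPath E p l q w) : q ∈ F := by
  induction h with
  | nil => exact hp
  | cons e _ ih => exact ih (hF _ _ _ _ e)

theorem map_iff {H : Type*} (f : G → H) {l : List H} :
    LabelledPath ((fun t => (t.1, t.2.1, t.2.2.1, f t.2.2.2)) '' E) p l q w ↔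
      ∃ l', l'.map f = l ∧ LabelledPath E p l' q w := by
  constructor
  · intro h
    induction h with
    | nil p => exact ⟨[], rfl, .nil p⟩
    | cons e _ ih =>
      obtain ⟨⟨p, σ, r, m⟩, he, heq⟩ := e
      obtain ⟨rfl, rfl, rfl, rfl⟩ := by simpa using heq
      obtain ⟨l', rfl, h'⟩ := ih
      exact ⟨m :: l', rfl, .cons he h'⟩
  · rintro ⟨l', rfl, h⟩
    induction h with
    | nil p => exact .nil p
    | cons e _ ih => exact .cons ⟨_, e, rfl⟩ ih

theorem pow_loop_none {m : G} (h : (p, none, p, m) ∈ E) (n : ℕ) :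
    LabelledPath E p (List.replicate n m) p [] := by
  induction n with
  | zero => exact .nil p
  | succ n ih => exact .cons h ih

theorem pow_loop_some {m : G} {a : α} (h : (p, some a, p, m) ∈ E) (n : ℕ) :
    LabelledPath E p (List.replicate n m) p (List.replicate n a) := by
  induction n with
  | zero => exact .nil p
  | succ n ih => exact .cons h ih

end LabelledPath

end LabelledPaths

namespace GAutomaton

variable {α G : Type*} [Group G] {M : GAutomaton α G}

theorem stepsIn_iff {k : ℕ} {p q : M.Q} {x y : G} {u v : List α} :
    M.StepsIn k (p, x, u) (q, y, v) ↔
      ∃ l w, l.length = k ∧ LabelledPath M.δ p l q w ∧ y = x * l.prod ∧ u = w ++ v := by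
  constructor
  · intro h
    induction k generalizing p x u with
    | zero =>
      obtain ⟨rfl, rfl, rfl⟩ := by simpa [StepsIn] using h
      exact ⟨[], [], rfl, .nil p, by simp, rfl⟩
    | succ k ih =>
      obtain ⟨⟨r, z, u'⟩, ⟨σ, m, hδ, hz, hσ⟩, h⟩ := h
      obtain ⟨l, w, rfl, hl, rfl, rfl⟩ := ih h
      obtain rfl : z = x * m := hz
      refine ⟨m :: l, σ.toList ++ w, rfl, .cons hδ hl, by simp [mul_assoc], ?_⟩
      cases σ with
      | none => exact hσ.symm
      | some a => exact hσ
  · rintro ⟨l, w, rfl, h, rfl, rfl⟩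
    induction h generalizing x with
    | nil p => simp [StepsIn]
    | @cons _ σ r m l _ w e _ ih =>
      refine ⟨(r, x * m, w ++ v), ⟨σ, m, e, rfl, by cases σ <;> rfl⟩, ?_⟩
      simpa [mul_assoc] using ih (x := x * m)

theorem mem_lang_iff {w : List α} :
    w ∈ M.lang ↔ ∃ q ∈ M.acc, ∃ l, LabelledPath M.δ M.q0 l q w ∧ l.prod = 1 := by
  constructor
  · rintro ⟨t, k, -, q, hq, h⟩
    obtain ⟨l, w, -, hl, hprod, rfl⟩ := stepsIn_iff.mp h
    exact ⟨q, hq, l, by simpa using hl, by simpa using hprod.symm⟩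
  · rintro ⟨q, hq, l, hl, hprod⟩
    exact ⟨_, _, le_rfl, q, hq, stepsIn_iff.mpr ⟨l, w, rfl, hl, by simp [hprod], by simp⟩⟩

/-- The `H`-automaton obtained by applying a homomorphism `G →* H` to the register labels. -/
def map {H : Type*} [Group H] (M : GAutomaton α G) (φ : G →* H) : GAutomaton α H where
  Q := M.Q
  finQ := M.finQ
  q0 := M.q0
  acc := M.acc
  δ := (fun t => (t.1, t.2.1, t.2.2.1, φ t.2.2.2)) '' M.δ
  finδ := M.finδ.image _

theorem lang_map {H : Type*} [Group H] (M : GAutomaton α G) {φ : G →* H}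
    (hφ : Function.Injective φ) : (M.map φ).lang = M.lang := by
  ext w
  simp only [mem_lang_iff, map, LabelledPath.map_iff]
  constructor
  · rintro ⟨q, hq, _, ⟨l, rfl, hl⟩, hprod⟩
    exact ⟨q, hq, l, hl, hφ (by rw [map_list_prod, hprod, map_one])⟩
  · rintro ⟨q, hq, l, hl, hprod⟩
    exact ⟨q, hq, l.map φ, ⟨l, rfl, hl⟩, by rw [← map_list_prod, hprod, map_one]⟩

end GAutomaton

theorem GRecognizable.of_injective {α G H : Type*} [Group G] [Group H] {L : Language α}
    (hL : GRecognizable G L) {φ : G →* H} (hφ : Function.Injective φ) : GRecognizable H L := by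
  obtain ⟨M, rfl⟩ := hL
  exact ⟨M.map φ, M.lang_map hφ⟩

section Triangulations

variable {X α G : Type*} [Group G] {E : Set (X × Option α × X × G)} {S B : Set G}

/-- A Muller–Schupp triangulation of the Cayley graph of `G` with respect to `S`: a word in `S` of
length at least two that represents an element of the finite set `B` can be cut in two nonempty
words that also represent elements of `B`. -/
structure IsTriangulation (S B : Set G) : Prop where
  finite : B.Finite
  one_mem : 1 ∈ B
  one_mem_generators : 1 ∈ S
  closure_generators : Submonoid.closure S = ⊤
  exists_split : ∀ l : List G, (∀ s ∈ l, s ∈ S) → l.prod ∈ B → 2 ≤ l.length →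
    ∃ l₁ l₂, l₁ ≠ [] ∧ l₂ ≠ [] ∧ l = l₁ ++ l₂ ∧ l₁.prod ∈ B ∧ l₂.prod ∈ B

/-- The words read along the paths with `n` edges from `p` to `q` that multiply the register by `g`;
the triples `(p, g, q)` serve as nonterminals. -/
def pathWords (E : Set (X × Option α × X × G)) : X × G × X → ℕ → Language α :=
  fun (p, g, q) n => {w | ∃ l, l.length = n ∧ l.prod = g ∧ LabelledPath E p l q w}

theorem append_mem_pathWords {p q r : X} {g h : G} {m n : ℕ} {v w : List α}
    (hv : v ∈ pathWords E (p, g, r) m) (hw : w ∈ pathWords E (r, h, q) n) :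
    v ++ w ∈ pathWords E (p, g * h, q) (m + n) := by
  obtain ⟨l₁, rfl, rfl, h₁⟩ := hv
  obtain ⟨l₂, rfl, rfl, h₂⟩ := hw
  exact ⟨l₁ ++ l₂, List.length_append, List.prod_append, h₁.append h₂⟩

theorem IsTriangulation.hasHeavySubderivations (h : IsTriangulation S B) {F : Set X}
    (hS : ∀ p σ r m, (p, σ, r, m) ∈ E → m ∈ S) (hF : ∀ p σ r m, (p, σ, r, m) ∈ E → r ∈ F) :
    HasHeavySubderivations (F ×ˢ B ×ˢ F) (pathWords E) := by
  rintro ⟨p, g, q⟩ ⟨hp, hg, hq⟩ _ w ⟨l, rfl, rfl, hl⟩ hw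
  obtain ⟨l₁, l₂, hne₁, hne₂, rfl, hB₁, hB₂⟩ :=
    h.exists_split l (hl.label_mem hS) hg (hw.trans hl.length_le)
  obtain ⟨r, w₁, w₂, rfl, h₁, h₂⟩ := hl.exists_split
  have hr : r ∈ F := h₁.target_mem hF hp
  have mem₁ : w₁ ∈ pathWords E (p, l₁.prod, r) l₁.length := ⟨l₁, rfl, rfl, h₁⟩
  have mem₂ : w₂ ∈ pathWords E (r, l₂.prod, q) l₂.length := ⟨l₂, rfl, rfl, h₂⟩
  have pos₁ := List.length_pos_iff.mpr hne₁
  have pos₂ := List.length_pos_iff.mpr hne₂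
  have hlen := List.length_append (as := w₁) (bs := w₂)
  rw [List.length_append, List.prod_append]
  rcases le_total w₂.length w₁.length with hle | hle
  · exact ⟨(p, l₁.prod, r), ⟨hp, hB₁, hr⟩, _, by omega, [], w₁, w₂, rfl, by omega, mem₁,
      fun n x hx => ⟨_, append_mem_pathWords hx mem₂⟩⟩
  · exact ⟨(r, l₂.prod, q), ⟨hr, hB₂, hq⟩, _, by omega, w₁, w₂, [], by simp, by omega, mem₂,
      fun n x hx => ⟨_, by simpa only [List.append_nil] using append_mem_pathWords mem₁ hx⟩⟩

/-- The transition system that replaces multiplication by `m` by successive multiplications by the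
letters of `word m`; its states also hold the letters still to be multiplied by. -/
inductive Subdivision (E : Set (X × Option α × X × G)) (word : G → List G) :
    (X × List G) × Option α × (X × List G) × G → Prop
  | read {p σ q m} : (p, σ, q, m) ∈ E → Subdivision E word ((p, []), σ, (q, word m), 1)
  | multiply {p σ q m s l} : (p, σ, q, m) ∈ E → s :: l <:+ word m →
      Subdivision E word ((q, s :: l), none, (q, l), s)

namespace Subdivision

variable {word : G → List G}

theorem label_mem (one_mem : 1 ∈ S) (hword : ∀ m, ∀ s ∈ word m, s ∈ S) {p r : X × List G}
    {σ : Option α} {m : G} (h : Subdivision E word (p, σ, r, m)) : m ∈ S := by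
  cases h with
  | read => exact one_mem
  | multiply _ hl => exact hword _ _ (hl.subset List.mem_cons_self)

theorem exists_finite_targets (hE : E.Finite) (word : G → List G) :
    ∃ F : Set (X × List G), F.Finite ∧ ∀ p σ r m, Subdivision E word (p, σ, r, m) → r ∈ F := by
  refine ⟨⋃ t ∈ E, {t.2.2.1} ×ˢ {l | l ∈ (word t.2.2.2).tails},
    hE.biUnion fun t _ => (Set.finite_singleton _).prod (List.finite_toSet _), fun p σ r m h => ?_⟩
  cases h with
  | read he => exact Set.mem_biUnion he ⟨rfl, (List.mem_tails ..).mpr List.suffix_rfl⟩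
  | multiply he hl =>
    exact Set.mem_biUnion he ⟨rfl, (List.mem_tails ..).mpr ((List.suffix_cons ..).trans hl)⟩

theorem path_multiply {p q : X} {σ : Option α} {m : G} (he : (p, σ, q, m) ∈ E) :
    ∀ {l : List G}, l <:+ word m → LabelledPath {t | Subdivision E word t} (q, l) l (q, []) []
  | [], _ => .nil _
  | _ :: _, hl => .cons (.multiply he hl) (path_multiply he ((List.suffix_cons ..).trans hl))

theorem exists_path (hword : ∀ m, (word m).prod = m) {p q : X} {l : List G} {w : List α}
    (h : LabelledPath E p l q w) : ∃ l', l'.prod = l.prod ∧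
      LabelledPath {t | Subdivision E word t} (p, []) l' (q, []) w := by
  induction h with
  | nil p => exact ⟨[], rfl, .nil _⟩
  | cons he _ ih =>
    obtain ⟨l', hprod, h'⟩ := ih
    exact ⟨1 :: (word _ ++ l'), by simp [hword, hprod],
      .cons (.read he) ((path_multiply he List.suffix_rfl).append h')⟩

theorem exists_path_of_path (hword : ∀ m, (word m).prod = m) {P Q : X × List G} {l' : List G}
    {w : List α} (h : LabelledPath {t | Subdivision E word t} P l' Q w) (hQ : Q.2 = []) :
    ∃ l, l'.prod = P.2.prod * l.prod ∧ LabelledPath E P.1 l Q.1 w := by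
  induction h with
  | nil P => exact ⟨[], by simp [hQ], .nil _⟩
  | cons he _ ih =>
    obtain ⟨l, hprod, hl⟩ := ih hQ
    cases he with
    | @read _ _ _ m he => exact ⟨m :: l, by simp [hprod, hword], .cons he hl⟩
    | multiply => exact ⟨l, by simp [hprod, mul_assoc], hl⟩

end Subdivision

theorem GAutomaton.exists_isPumpable (h : IsTriangulation S B) (M : GAutomaton α G) :
    ∃ K, ∀ w ∈ M.lang, K ≤ w.length → IsPumpable M.lang w := by
  have hword : ∀ m : G, ∃ l : List G, (∀ s ∈ l, s ∈ S) ∧ l.prod = m := fun m =>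
    Submonoid.exists_list_of_mem_closure (h.closure_generators ▸ Submonoid.mem_top m)
  choose word word_mem word_prod using hword
  obtain ⟨F, hFfin, hF⟩ := Subdivision.exists_finite_targets M.finδ word
  let F' := insert (M.q0, []) (F ∪ M.acc ×ˢ {[]})
  have hF'fin : F'.Finite := by
    have := M.finQ
    exact (hFfin.union (M.acc.toFinite.prod (Set.finite_singleton _))).insert _
  have hheavy : HasHeavySubderivations (F' ×ˢ B ×ˢ F')
      (pathWords {t | Subdivision M.δ word t}) :=
    h.hasHeavySubderivations
      (fun _ _ _ _ => Subdivision.label_mem h.one_mem_generators word_mem)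
      (fun p σ r m he => .inr (.inl (hF p σ r m he)))
  obtain ⟨K, hK⟩ := hheavy.exists_isPumpable (hF'fin.prod (h.finite.prod hF'fin))
  refine ⟨K, fun w hw hlen => ?_⟩
  obtain ⟨q, hq, l, hl, hprod⟩ := mem_lang_iff.mp hw
  obtain ⟨l', hprod', hl'⟩ := Subdivision.exists_path word_prod hl
  obtain ⟨u, v, x, y, z, rfl, hvy, hpump⟩ := hK ((M.q0, []), 1, (q, []))
    ⟨.inl rfl, h.one_mem, .inr (.inr ⟨hq, rfl⟩)⟩ _ w ⟨l', rfl, hprod'.trans hprod, hl'⟩ hlen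
  refine ⟨u, v, x, y, z, rfl, hvy, fun m => ?_⟩
  obtain ⟨_, l'', -, hprod'', hl''⟩ := hpump m
  obtain ⟨l, hprod, hl⟩ := Subdivision.exists_path_of_path word_prod hl'' rfl
  exact mem_lang_iff.mpr ⟨q, hq, l, hl, by simpa [hprod''] using hprod.symm⟩

end Triangulations

section FareyTree

open Matrix ModularGroup
open scoped MatrixGroups

variable {g h : SL(2, ℤ)} {e : ℤˣ}

/-- The matrices with entries in `{-1, 0, 1}`; they label the chords of a triangulation of the
Cayley graph of `SL(2, ℤ)`. -/
def smallElements : Set SL(2, ℤ) := {g | ∀ i j, |g i j| ≤ 1}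

/-- The matrices whose columns, as points of the projective line, lie both in `[0, ∞]` (for `e = 1`)
or both in `[-∞, 0]` (for `e = -1`), the two sides of the Farey edge from `0` to `∞`. -/
def fareySide (e : ℤˣ) : Set SL(2, ℤ) := {g | ∀ j, 0 ≤ e * (g 0 j * g 1 j)}

/-- The matrices whose columns are the end points of the Farey edge from `0` to `∞`. -/
def fareyWall : Set SL(2, ℤ) := {g | ∀ j, g 0 j * g 1 j = 0}

/-- The stabilizer of the Farey edge from `0` to `∞` together with `T` and its inverse. -/
def fareyGenerators : Set SL(2, ℤ) := fareyWall ∪ Set.range fun e : ℤˣ => T ^ (e : ℤ)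

theorem det_fin_two_eq_one {R : Type*} [CommRing R] (g : SL(2, R)) :
    g 0 0 * g 1 1 - g 0 1 * g 1 0 = 1 :=
  (det_fin_two g.1).symm.trans g.2

theorem mul_apply_fin_two {R : Type*} [CommRing R] (g h : SL(2, R)) (i j : Fin 2) :
    (g * h) i j = g i 0 * h 0 j + g i 1 * h 1 j := by
  rw [Matrix.SpecialLinearGroup.coe_mul, mul_apply, Fin.sum_univ_two]

theorem inv_mul_apply_zero {R : Type*} [CommRing R] (g h : SL(2, R)) (j : Fin 2) :
    (g⁻¹ * h) 0 j = g 1 1 * h 0 j - g 0 1 * h 1 j := by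
  simp [mul_apply_fin_two, adjugate_fin_two, sub_eq_add_neg]

theorem inv_mul_apply_one {R : Type*} [CommRing R] (g h : SL(2, R)) (j : Fin 2) :
    (g⁻¹ * h) 1 j = g 0 0 * h 1 j - g 1 0 * h 0 j := by
  simp [mul_apply_fin_two, adjugate_fin_two, sub_eq_neg_add]

theorem smallElements_finite : smallElements.Finite := by
  refine Set.Finite.of_finite_image (f := fun g : SL(2, ℤ) => g.1) ?_ Subtype.val_injective.injOn
  refine (Set.Finite.pi' fun _ => Set.Finite.pi' fun _ => Set.finite_Icc (-1 : ℤ) 1).subset ?_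
  rintro _ ⟨g, hg, rfl⟩ i j
  exact abs_le.mp (hg i j)

theorem one_mem_fareyWall : 1 ∈ fareyWall := by
  simp [fareyWall, Fin.forall_fin_two]

theorem S_mem_fareyWall : S ∈ fareyWall :=
  Fin.forall_fin_two.mpr ⟨by simp [S], by simp [S]⟩

theorem S_inv_mem_fareyWall : S⁻¹ ∈ fareyWall :=
  Fin.forall_fin_two.mpr ⟨by simp [coe_S, adjugate_fin_two], by simp [coe_S, adjugate_fin_two]⟩

theorem abs_le_one_of_mul_eq_zero {a b c d : ℤ} (hdet : a * d - b * c = 1) (hac : a * c = 0) :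
    |a| ≤ 1 ∧ |c| ≤ 1 := by
  rcases mul_eq_zero.mp hac with rfl | rfl
  · have hc : IsUnit c := .of_mul_eq_one (-b) (by linarith)
    exact ⟨by simp, (Int.isUnit_iff_abs_eq.mp hc).le⟩
  · have ha : IsUnit a := .of_mul_eq_one d (by linarith)
    exact ⟨(Int.isUnit_iff_abs_eq.mp ha).le, by simp⟩

theorem fareyWall_subset_smallElements : fareyWall ⊆ smallElements := by
  intro g hg
  have hdet := det_fin_two_eq_one g
  obtain ⟨h00, h10⟩ := abs_le_one_of_mul_eq_zero hdet (hg 0)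
  obtain ⟨h01, h11⟩ := abs_le_one_of_mul_eq_zero (a := g 0 1) (b := -g 0 0) (d := -g 1 0)
    (by linarith) (hg 1)
  simp [smallElements, Fin.forall_fin_two, h00, h01, h10, h11]

theorem fareyWall_subset_fareySide : fareyWall ⊆ fareySide e := fun g hg j => by
  rw [hg j, mul_zero]

theorem T_zpow_mem_fareySide : T ^ (e : ℤ) ∈ fareySide e := by
  simp [fareySide, Fin.forall_fin_two, coe_T_zpow]

theorem T_zpow_mem_smallElements : T ^ (e : ℤ) ∈ smallElements := by
  simp [smallElements, Fin.forall_fin_two, coe_T_zpow, Int.isUnit_iff_abs_eq.mp e.isUnit]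

theorem abs_sub_le_one_of_mul_eq_zero {a b x y : ℤ} (hab : a * b = 0) (ha : |a| ≤ 1)
    (hb : |b| ≤ 1) (hx : |x| ≤ 1) (hy : |y| ≤ 1) : |a * x - b * y| ≤ 1 := by
  rcases mul_eq_zero.mp hab with rfl | rfl
  · simpa [abs_mul] using mul_le_one₀ hb (abs_nonneg y) hy
  · simpa [abs_mul] using mul_le_one₀ ha (abs_nonneg x) hx

theorem inv_mul_mem_smallElements_of_mem_fareyWall (hg : g ∈ fareyWall) (hh : h ∈ smallElements) :
    g⁻¹ * h ∈ smallElements := by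
  have hsmall := fareyWall_subset_smallElements hg
  refine Fin.forall_fin_two.mpr ⟨fun j => ?_, fun j => ?_⟩
  · rw [inv_mul_apply_zero]
    exact abs_sub_le_one_of_mul_eq_zero (by rw [mul_comm, hg 1]) (hsmall 1 1) (hsmall 0 1)
      (hh 0 j) (hh 1 j)
  · rw [inv_mul_apply_one]
    exact abs_sub_le_one_of_mul_eq_zero (hg 0) (hsmall 0 0) (hsmall 1 0) (hh 1 j) (hh 0 j)

theorem abs_sub_le_one_of_mul_nonneg {x y : ℤ} (hx : |x| ≤ 1) (hy : |y| ≤ 1) (h : 0 ≤ x * y) :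
    |x - y| ≤ 1 := by
  rw [abs_le] at hx hy ⊢
  constructor <;> nlinarith

theorem T_zpow_inv_mul_mem_smallElements (hside : g ∈ fareySide e) (hg : g ∈ smallElements) :
    (T ^ (e : ℤ))⁻¹ * g ∈ smallElements := by
  refine Fin.forall_fin_two.mpr ⟨fun j => ?_, fun j => ?_⟩
  · have habs : |e * g 1 j| ≤ 1 := by
      simpa [abs_mul, Int.isUnit_iff_abs_eq.mp e.isUnit] using hg 1 j
    simpa [inv_mul_apply_zero, coe_T_zpow] using abs_sub_le_one_of_mul_nonneg (hg 0 j) habs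
      (by linarith [hside j])
  · simpa [inv_mul_apply_one, coe_T_zpow] using hg 1 j

theorem mul_mem_fareySide_of_mem_fareyWall (hg : g ∈ fareySide e) (hh : h ∈ fareyWall) :
    g * h ∈ fareySide e := by
  intro j
  have hcol : e * ((g * h) 0 j * (g * h) 1 j) =
      h 0 j ^ 2 * (e * (g 0 0 * g 1 0)) + h 1 j ^ 2 * (e * (g 0 1 * g 1 1)) := by
    rw [mul_apply_fin_two, mul_apply_fin_two]
    linear_combination e * (g 0 0 * g 1 1 + g 0 1 * g 1 0) * hh j
  rw [hcol]
  exact add_nonneg (mul_nonneg (sq_nonneg _) (hg 0)) (mul_nonneg (sq_nonneg _) (hg 1))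

theorem mul_eq_zero_of_mul_add_neg {a b c d : ℤ} (hdet : (a * d - b * c) ^ 2 = 1)
    (hac : 0 ≤ a * c) (hbd : 0 ≤ b * d) (h : (a + b) * (c + d) < 0) : a * c = 0 ∧ b * d = 0 := by
  have hle : (a * c + b * d + 1) ^ 2 ≤ (-(a * d + b * c)) ^ 2 := by gcongr; linarith
  -- `(a * d + b * c) ^ 2 = 1 + 4 * (a * c) * (b * d)` by `hdet`
  have hsum : (a * c - b * d) ^ 2 + 2 * (a * c + b * d) ≤ 0 := by
    linear_combination hle + hdet
  have := sq_nonneg (a * c - b * d)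
  constructor <;> linarith only [hac, hbd, hsum, this]

theorem mem_fareyWall_of_mul_T_zpow_notMem {f : ℤˣ} (hg : g ∈ fareySide e)
    (hgT : g * T ^ (f : ℤ) ∉ fareySide e) : g ∈ fareyWall := by
  have hee : (e * e : ℤ) = 1 := Int.units_coe_mul_self e
  have hff : (f * f : ℤ) = 1 := Int.units_coe_mul_self f
  have hdet := det_fin_two_eq_one g
  have h0 := hg 0
  have h1 := hg 1
  have hneg : e * ((f * g 0 0 + g 0 1) * (f * g 1 0 + g 1 1)) < 0 := by
    by_contra! hnonneg
    refine hgT (Fin.forall_fin_two.mpr ⟨?_, ?_⟩)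
    · simpa [mul_apply_fin_two, coe_T_zpow] using h0
    · simpa [mul_apply_fin_two, coe_T_zpow, mul_comm] using hnonneg
  have hsq : (e * f * g 0 0 * g 1 1 - e * g 0 1 * (f * g 1 0)) ^ 2 = 1 :=
    calc
      _ = (e * e : ℤ) * (f * f) * (g 0 0 * g 1 1 - g 0 1 * g 1 0) ^ 2 := by ring
      _ = 1 := by rw [hee, hff, hdet]; norm_num
  obtain ⟨hac, hbd⟩ := mul_eq_zero_of_mul_add_neg hsq
    (by linear_combination h0 - e * (g 0 0 * g 1 0) * hff) (by linear_combination h1)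
    (by linear_combination hneg)
  have he : (e : ℤ) ≠ 0 := e.ne_zero
  have hf : (f : ℤ) ≠ 0 := f.ne_zero
  exact Fin.forall_fin_two.mpr ⟨by simpa [he, hf] using hac, by simpa [he] using hbd⟩

theorem exists_prefix_mem_fareyWall {l : List SL(2, ℤ)} (hl : ∀ s ∈ l, s ∈ fareyGenerators)
    (hg : g ∈ fareySide e) (hgl : g * l.prod ∉ fareySide e) :
    ∃ l₁ l₂, l = l₁ ++ l₂ ∧ g * l₁.prod ∈ fareyWall := by
  induction l generalizing g with
  | nil => exact absurd (by simpa using hg) hgl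
  | cons s l ih =>
    by_cases hgs : g * s ∈ fareySide e
    · obtain ⟨l₁, l₂, rfl, hl₁⟩ := ih (fun t ht => hl t (List.mem_cons_of_mem s ht)) hgs
        (by rwa [mul_assoc, ← List.prod_cons])
      exact ⟨s :: l₁, l₂, rfl, by rwa [List.prod_cons, ← mul_assoc]⟩
    · refine ⟨[], s :: l, rfl, ?_⟩
      rcases hl s List.mem_cons_self with hs | ⟨f, rfl⟩
      · exact absurd (mul_mem_fareySide_of_mem_fareyWall hg hs) hgs
      · simpa using mem_fareyWall_of_mul_T_zpow_notMem hg hgs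

theorem closure_fareyGenerators : Submonoid.closure fareyGenerators = ⊤ := by
  have hsub : ({S, T} ∪ {S, T}⁻¹ : Set SL(2, ℤ)) ⊆ fareyGenerators := by
    rintro s ((rfl | rfl) | hs)
    · exact .inl S_mem_fareyWall
    · exact .inr ⟨1, zpow_one T⟩
    rw [Set.inv_insert, Set.inv_singleton] at hs
    rcases hs with rfl | rfl
    · exact .inl S_inv_mem_fareyWall
    · exact .inr ⟨-1, zpow_neg_one T⟩
  have htop := Subgroup.closure_toSubmonoid ({S, T} : Set SL(2, ℤ))
  rw [SpecialLinearGroup.SL2Z_generators, Subgroup.top_toSubmonoid] at htop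
  exact top_le_iff.mp (htop.trans_le (Submonoid.closure_mono hsub))

theorem isTriangulation_smallElements : IsTriangulation fareyGenerators smallElements where
  finite := smallElements_finite
  one_mem := fareyWall_subset_smallElements one_mem_fareyWall
  one_mem_generators := .inl one_mem_fareyWall
  closure_generators := closure_fareyGenerators
  exists_split
  | s :: l, hl, hprod, hlen => by
    rw [List.prod_cons] at hprod
    have hne : l ≠ [] := by rintro rfl; simp at hlen
    rcases hl s List.mem_cons_self with hs | ⟨e, rfl⟩
    · refine ⟨[s], l, by simp, hne, rfl, ?_, ?_⟩
      · simpa using fareyWall_subset_smallElements hs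
      · simpa using inv_mul_mem_smallElements_of_mem_fareyWall hs hprod
    by_cases hside : T ^ (e : ℤ) * l.prod ∈ fareySide e
    · refine ⟨[T ^ (e : ℤ)], l, by simp, hne, rfl, ?_, ?_⟩
      · simpa using T_zpow_mem_smallElements
      · simpa using T_zpow_inv_mul_mem_smallElements hside hprod
    obtain ⟨l₁, l₂, rfl, hwall⟩ := exists_prefix_mem_fareyWall
      (fun t ht => hl t (List.mem_cons_of_mem _ ht)) T_zpow_mem_fareySide hside
    refine ⟨T ^ (e : ℤ) :: l₁, l₂, by simp, ?_, rfl, ?_, ?_⟩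
    · rintro rfl
      exact hside (fareyWall_subset_fareySide (by simpa using hwall))
    · simpa using fareyWall_subset_smallElements hwall
    · simpa [mul_assoc] using inv_mul_mem_smallElements_of_mem_fareyWall hwall hprod

end FareyTree

section OddPowersOfTwo

theorem mem_LoddPow_iff {w : List (Fin 1)} : w ∈ LoddPow ↔ ∃ n, w.length = 2 ^ (2 * n + 1) :=
  exists_congr fun _ => List.eq_replicate_iff.trans (and_iff_left fun _ _ => Subsingleton.elim _ _)

theorem not_isPumpable_LoddPow (w : List (Fin 1)) : ¬ IsPumpable LoddPow w := by
  rintro ⟨u, v, x, y, z, -, hvy, hpump⟩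
  have hpow (m : ℕ) : ∃ n, u.length + x.length + z.length + m * (v ++ y).length = 2 ^ n := by
    obtain ⟨n, hn⟩ := mem_LoddPow_iff.mp (hpump m)
    refine ⟨2 * n + 1, hn ▸ ?_⟩
    simp only [List.length_append, List.length_flatten, List.map_replicate, List.sum_replicate,
      smul_eq_mul]
    ring
  have hpos := List.length_pos_iff.mpr hvy
  generalize u.length + x.length + z.length = b at hpow
  generalize (v ++ y).length = c at hpow hpos
  obtain ⟨n, hn⟩ := hpow (1 + 2 * (b + c))
  have hdvd : 2 * c + 1 ∣ 2 ^ n := ⟨b + c, by rw [← hn]; ring⟩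
  have hcoprime : Nat.Coprime (2 * c + 1) (2 ^ n) :=
    Nat.Coprime.pow_right n (Nat.coprime_two_right.mpr ⟨c, rfl⟩)
  have := hcoprime.eq_one_of_dvd hdvd
  omega

theorem not_gRecognizable_SL2Z_LoddPow :
    ¬ GRecognizable (Matrix.SpecialLinearGroup (Fin 2) ℤ) LoddPow := by
  rintro ⟨M, hM⟩
  obtain ⟨K, hK⟩ := M.exists_isPumpable isTriangulation_smallElements
  rw [hM] at hK
  refine not_isPumpable_LoddPow _ (hK (List.replicate (2 ^ (2 * K + 1)) 0) ⟨K, rfl⟩ ?_)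
  rw [List.length_replicate]
  exact Nat.lt_two_pow_self.le.trans (Nat.pow_le_pow_right two_pos (by omega))

end OddPowersOfTwo

namespace GAutomaton

variable {α G : Type*} [Group G] {x y z t : G} {a : α}

/-- The automaton that multiplies its register by `x ^ i`, by `y` and by `z ^ j` for guessed `i` and
`j`, and then by `t⁻¹` for each letter `a` of the input. -/
def powCounter (x y z t : G) (a : α) : GAutomaton α G where
  Q := Fin 3
  finQ := inferInstance
  q0 := 0
  acc := {2}
  δ := {(0, none, 0, x), (0, none, 1, y), (1, none, 1, z), (1, none, 2, 1), (2, some a, 2, t⁻¹)}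
  finδ := Set.toFinite _

theorem prod_of_powCounter_path {p : Fin 3} {l : List G} {w : List α}
    (h : LabelledPath (powCounter x y z t a).δ p l (2 : Fin 3) w) : ∃ i j k,
      w = List.replicate k a ∧ l.prod = ![x ^ i * y * z ^ j, z ^ j, 1] p * (t ^ k)⁻¹ := by
  generalize hq : (2 : Fin 3) = q at h
  induction h with
  | nil p => subst hq; exact ⟨0, 0, 0, by simp⟩
  | cons e _ ih =>
    obtain ⟨i, j, k, rfl, hprod⟩ := ih hq
    rw [List.prod_cons, hprod]
    simp only [powCounter, Set.mem_insert_iff, Set.mem_singleton_iff, Prod.mk.injEq] at e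
    rcases e with ⟨rfl, rfl, rfl, rfl⟩ | ⟨rfl, rfl, rfl, rfl⟩ | ⟨rfl, rfl, rfl, rfl⟩ |
      ⟨rfl, rfl, rfl, rfl⟩ | ⟨rfl, rfl, rfl, rfl⟩
    · exact ⟨i + 1, j, k, rfl, by simp [pow_succ', mul_assoc]⟩
    · exact ⟨0, j, k, rfl, by simp [mul_assoc]⟩
    · exact ⟨i, j + 1, k, rfl, by simp [pow_succ', mul_assoc]⟩
    · exact ⟨i, 0, k, rfl, by simp⟩
    · exact ⟨i, j, k + 1, rfl, by simp [pow_succ]⟩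

theorem powCounter_path (x y z t : G) (a : α) (i j k : ℕ) :
    LabelledPath (powCounter x y z t a).δ (0 : Fin 3)
      (List.replicate i x ++ y :: (List.replicate j z ++ 1 :: List.replicate k t⁻¹))
      (2 : Fin 3) (List.replicate k a) :=
  have loop_x : ((0 : Fin 3), none, (0 : Fin 3), x) ∈ (powCounter x y z t a).δ := .inl rfl
  have step_y : ((0 : Fin 3), none, (1 : Fin 3), y) ∈ (powCounter x y z t a).δ := .inr (.inl rfl)
  have loop_z : ((1 : Fin 3), none, (1 : Fin 3), z) ∈ (powCounter x y z t a).δ :=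
    .inr (.inr (.inl rfl))
  have step_one : ((1 : Fin 3), none, (2 : Fin 3), 1) ∈ (powCounter x y z t a).δ :=
    .inr (.inr (.inr (.inl rfl)))
  have loop_t : ((2 : Fin 3), some a, (2 : Fin 3), t⁻¹) ∈ (powCounter x y z t a).δ :=
    .inr (.inr (.inr (.inr rfl)))
  (LabelledPath.pow_loop_none loop_x i).append <| .cons step_y <|
    (LabelledPath.pow_loop_none loop_z j).append <| .cons step_one <|
      LabelledPath.pow_loop_some loop_t k

theorem mem_lang_powCounter_iff {w : List α} : w ∈ (powCounter x y z t a).lang ↔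
    ∃ i j k, w = List.replicate k a ∧ x ^ i * y * z ^ j = t ^ k := by
  rw [mem_lang_iff]
  constructor
  · rintro ⟨_, rfl, l, h, hprod⟩
    obtain ⟨i, j, k, rfl, hl⟩ := prod_of_powCounter_path h
    exact ⟨i, j, k, rfl, mul_inv_eq_one.mp (hl.symm.trans hprod)⟩
  · rintro ⟨i, j, k, rfl, h⟩
    exact ⟨_, rfl, _, powCounter_path x y z t a i j k, by simp [← mul_assoc, h]⟩

end GAutomaton

section DiagonalAndUnipotent

open Matrix.SpecialLinearGroup

variable {F : Type*} [Field F]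

theorem transvection_pow {ι R : Type*} [DecidableEq ι] [Fintype ι] [CommRing R] {i j : ι}
    (hij : i ≠ j) (b : R) (n : ℕ) : transvection hij b ^ n = transvection hij (n * b) := by
  induction n with
  | zero => simp
  | succ n ih => rw [pow_succ, ih, ← transvection_add, Nat.cast_succ, add_one_mul]

theorem diag2_pow {a : F} (ha : a ≠ 0) (n : ℕ) :
    diag2 a ha ^ n = diag2 (a ^ n) (pow_ne_zero n ha) := by
  induction n with
  | zero => apply Subtype.ext; simp [diag2_coe', Matrix.one_fin_two]
  | succ n ih =>
    rw [pow_succ, ih]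
    apply Subtype.ext
    simp [diag2_coe', pow_succ, mul_comm]

theorem coe_transvection_zero_one (b : F) :
    (transvection zero_ne_one b : Matrix.SpecialLinearGroup (Fin 2) F).1 = !![1, b; 0, 1] := by
  rw [transvection_coe, Matrix.one_fin_two, ← Matrix.ext_iff]
  simp [Fin.forall_fin_two]

theorem diag2_mul_transvection_mul_diag2_inv_eq_iff {a b c d : F} (ha : a ≠ 0) (hc : c ≠ 0) :
    diag2 a ha * transvection zero_ne_one b * (diag2 c hc)⁻¹ = transvection zero_ne_one d ↔
      a = c ∧ d = a * b * c := by
  have entries : !![a, a * b; 0, a⁻¹] = !![c, d * c⁻¹; 0, c⁻¹] ↔ a = c ∧ a * b = d * c⁻¹ := by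
    simp +contextual [and_assoc]
  rw [mul_inv_eq_iff_eq_mul]
  refine Subtype.ext_iff.trans ?_
  rw [eq_comm (a := d), ← eq_mul_inv_iff_mul_eq₀ hc, ← entries]
  simp [diag2_coe', coe_transvection_zero_one]

theorem gRecognizable_SL2Q_LoddPow :
    GRecognizable (Matrix.SpecialLinearGroup (Fin 2) ℚ) LoddPow := by
  have two_ne : (2 : ℚ) ≠ 0 := two_ne_zero
  refine ⟨.powCounter (diag2 2 two_ne) (transvection zero_ne_one 2) (diag2 2 two_ne)⁻¹
    (transvection zero_ne_one 1) 0, ?_⟩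
  have key (i j k : ℕ) : diag2 (2 : ℚ) two_ne ^ i * transvection zero_ne_one 2 *
      (diag2 2 two_ne)⁻¹ ^ j = transvection zero_ne_one 1 ^ k ↔ i = j ∧ k = 2 ^ (2 * i + 1) := by
    rw [inv_pow, diag2_pow, diag2_pow, transvection_pow,
      diag2_mul_transvection_mul_diag2_inv_eq_iff, pow_right_inj₀ two_pos (by norm_num)]
    refine and_congr_right ?_
    rintro rfl
    rw [mul_one, show (2 : ℚ) ^ i * 2 * 2 ^ i = ((2 ^ (2 * i + 1) : ℕ) : ℚ) by push_cast; ring,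
      Nat.cast_inj]
  ext w
  rw [GAutomaton.mem_lang_powCounter_iff]
  simp only [key]
  constructor
  · rintro ⟨i, _, _, rfl, rfl, rfl⟩
    exact ⟨i, rfl⟩
  · rintro ⟨n, rfl⟩
    exact ⟨n, n, _, rfl, rfl, rfl⟩

end DiagonalAndUnipotent

/-- `{ a^(2^(2n+1)) }` is recognized by an `SL(2,ℚ)`-automaton, and
consequently `𝔏(SL(2,ℤ)) ⊊ 𝔏(SL(2,ℚ))`. -/
theorem SL2Z_lt_SL2Q :
    GRecognizable (Matrix.SpecialLinearGroup (Fin 2) ℚ) LoddPow ∧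
    (∀ (α : Type) [Fintype α] (L : Language α),
      GRecognizable (Matrix.SpecialLinearGroup (Fin 2) ℤ) L →
        GRecognizable (Matrix.SpecialLinearGroup (Fin 2) ℚ) L) ∧
    ¬ GRecognizable (Matrix.SpecialLinearGroup (Fin 2) ℤ) LoddPow :=
  ⟨gRecognizable_SL2Q_LoddPow,
    fun _ _ _ hL => hL.of_injective
      (φ := Matrix.SpecialLinearGroup.map (Int.castRingHom ℚ))
      Matrix.SpecialLinearGroup.map_intCast_injective,
    not_gRecognizable_SL2Z_LoddPow⟩
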